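/- For every integer n ≥ 2 and all c1, c2 ∈ K, the ideal R_n(P) is a Poisson ideal of Z(P) with respect to the (c1,c2)-swapping bracket (i.e., {Z(P), R_n(P)} ⊆ R_n(P)); consequently the (c1,c2)-swapping bracket descends to a well-defined Poisson bracket on the rank n swapping ring Z_n(P) = Z(P)/R_n(P). -/

import Mathlib

noncomputable section

open scoped Classical
open MvPolynomial

set_option maxHeartbeats 1000000
set_option synthInstance.maxHeartbeats 400000

instance fact01 : Fact ((0:ℝ) < 1) := ⟨one_pos⟩

/-- The circle, modelled as `ℝ/ℤ`. -/
abbrev Circle1 : Type := AddCircle (1:ℝ)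

/-- The coordinate in `[0,1)` of the point `x` of the circle obtained after removing the
point `o` and identifying the complement of `o` with an interval. -/
def coordAt (o x : Circle1) : ℝ := ((AddCircle.equivIco 1 0) (x - o) : ℝ)

/-- The sign `△` of a real number, as a rational number in `{-1, 0, 1}`. -/
def sgnQ (a : ℝ) : ℚ := if a < 0 then -1 else if a = 0 then 0 else 1

/-- The linking number `J(rx, sy)` of the chords `rx` and `sy`, computed using the
cut point `o`. -/
def linkingAt (o r x s y : Circle1) : ℚ :=
  (1/2) * (sgnQ (coordAt o r - coordAt o x) * sgnQ (coordAt o r - coordAt o y)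
        * sgnQ (coordAt o y - coordAt o x)
      - sgnQ (coordAt o r - coordAt o x) * sgnQ (coordAt o r - coordAt o s)
        * sgnQ (coordAt o s - coordAt o x))

lemma circle1_infinite : Infinite Circle1 := by
  have h : (Set.Ico (0:ℝ) (0+1)).Infinite := Set.Ico_infinite (by norm_num)
  haveI := h.to_subtype
  exact Infinite.of_injective (fun q : Set.Ico (0:ℝ) (0+1) => (AddCircle.equivIco 1 0).symm q)
    ((AddCircle.equivIco 1 0).symm.injective)

lemma exists_cut (r x s y : Circle1) :
    ∃ o : Circle1, o ≠ r ∧ o ≠ x ∧ o ≠ s ∧ o ≠ y := by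
  haveI : Infinite Circle1 := circle1_infinite
  have hfin : ({r, x, s, y} : Set Circle1).Finite :=
    (((Set.finite_singleton y).insert s).insert x).insert r
  obtain ⟨o, ho⟩ := hfin.infinite_compl.nonempty
  simp only [Set.mem_compl_iff, Set.mem_insert_iff, Set.mem_singleton_iff, not_or] at ho
  exact ⟨o, ho.1, ho.2.1, ho.2.2.1, ho.2.2.2⟩

/-- The linking number `J(rx, sy)` of the chords `rx` and `sy` (computed with respect to
some cut point distinct from the four points; by the independence of the choice this is
the linking number). -/
def linkQ (r x s y : Circle1) : ℚ := linkingAt (exists_cut r x s y).choose r x s y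

/-- The set of points of the circle `l`, listed in anticlockwise (cyclic) order:
there is a cut point `o` avoiding them such that the induced coordinates are
strictly increasing along the list. -/
def AnticlockwiseList (l : List Circle1) : Prop :=
  ∃ o : Circle1, (∀ p ∈ l, p ≠ o) ∧ (l.map (coordAt o)).Chain' (· < ·)

/-- Index type for the generators `xy` of the swapping ring of `P`
(one generator for each ordered pair of distinct points; the generators `xx`
are identified with `0`). -/
abbrev SwapIdx (P : Set Circle1) : Type := {q : (↥P) × (↥P) // q.1 ≠ q.2}

/-- The swapping ring `Z(P)`: the polynomial ring over `K` on the generators `xy`,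
`x ≠ y ∈ P` (this realizes the commutative ring generated by all ordered pairs `xy`
subject to the relations `xx = 0`). -/
abbrev SwapRing (K : Type) [Field K] (P : Set Circle1) : Type := MvPolynomial (SwapIdx P) K

/-- The generator `xy` of the swapping ring (equal to `0` when `x = y`). -/
def gen (K : Type) [Field K] (P : Set Circle1) (x y : ↥P) : SwapRing K P :=
  if h : x ≠ y then MvPolynomial.X (⟨(x, y), h⟩ : SwapIdx P) else 0

/-- The value of the `(c1,c2)`-swapping bracket on two generators `rx` and `sy`:
`J(rx,sy) • (c1 • ry·sx + c2 • rx·sy)`. -/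
def genBr (K : Type) [Field K] (P : Set Circle1) (c1 c2 : K) (g g' : SwapIdx P) :
    SwapRing K P :=
  ((linkQ g.1.1.1 g.1.2.1 g'.1.1.1 g'.1.2.1 : ℚ) : K) •
    (c1 • (gen K P g.1.1 g'.1.2 * gen K P g'.1.1 g.1.2)
      + c2 • (gen K P g.1.1 g.1.2 * gen K P g'.1.1 g'.1.2))

/-- The `(c1,c2)`-swapping bracket on `Z(P)`: the biderivation extending
`{rx, sy} = J(rx,sy)·(c1·ry·sx + c2·rx·sy)` by the Leibniz rule in each argument.
The swapping bracket is the case `c1 = 1, c2 = 0`. -/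
def swapBr (K : Type) [Field K] (P : Set Circle1) (c1 c2 : K) (a b : SwapRing K P) :
    SwapRing K P :=
  (MvPolynomial.mkDerivation K
    (fun g : SwapIdx P => (MvPolynomial.mkDerivation K (genBr K P c1 c2 g)) b)) a

/-- `Δ((x_1,…,x_m),(y_1,…,y_m)) = det (x_i y_j)` in the swapping ring. -/
def Dmat (K : Type) [Field K] (P : Set Circle1) (m : ℕ) (xs ys : Fin m → ↥P) :
    SwapRing K P :=
  Matrix.det (Matrix.of fun i j => gen K P (xs i) (ys j))

/-- The ideal `R_n(P)` of `Z(P)` generated by all `(n+1)×(n+1)` determinants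
`Δ((x_1,…,x_{n+1}),(y_1,…,y_{n+1}))`. -/
def Rideal (K : Type) [Field K] (P : Set Circle1) (n : ℕ) : Ideal (SwapRing K P) :=
  Ideal.span {D : SwapRing K P | ∃ xs ys : Fin (n+1) → ↥P, D = Dmat K P (n+1) xs ys}

/-- The rank `n` swapping ring `Z_n(P) = Z(P)/R_n(P)`. -/
abbrev ZnRing (K : Type) [Field K] (P : Set Circle1) (n : ℕ) : Type :=
  SwapRing K P ⧸ Rideal K P n

/-- The quotient map `Z(P) → Z_n(P)`. -/
def toZn (K : Type) [Field K] (P : Set Circle1) (n : ℕ) :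
    SwapRing K P →+* ZnRing K P n := Ideal.Quotient.mk (Rideal K P n)

/-- The total fraction ring `Q_n(P)` of the rank `n` swapping ring. -/
abbrev QnRing (K : Type) [Field K] (P : Set Circle1) (n : ℕ) : Type :=
  Localization (nonZeroDivisors (ZnRing K P n))

/-- The canonical map `Z(P) → Q_n(P)`. -/
def toQn (K : Type) [Field K] (P : Set Circle1) (n : ℕ) :
    SwapRing K P →+* QnRing K P n :=
  (algebraMap (ZnRing K P n) (QnRing K P n)).comp (toZn K P n)

/-- `Bq` is the extension to the total fraction ring `Q_n(P)` of the `(c1,c2)`-swapping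
bracket of the rank `n` swapping algebra: it agrees with the swapping bracket on the image
of `Z(P)` and satisfies the Leibniz rule in both arguments (these properties determine it
uniquely). -/
def IsQnBracket (K : Type) [Field K] (P : Set Circle1) (n : ℕ) (c1 c2 : K)
    (Bq : QnRing K P n → QnRing K P n → QnRing K P n) : Prop :=
  (∀ a b : SwapRing K P,
      Bq (toQn K P n a) (toQn K P n b) = toQn K P n (swapBr K P c1 c2 a b)) ∧
  (∀ a b c : QnRing K P n, Bq (a * b) c = a * Bq b c + b * Bq a c) ∧
  (∀ a b c : QnRing K P n, Bq a (b * c) = b * Bq a c + c * Bq a b)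

/-- The `n`-tuple `(x_1, …, x_a, y_1, …, y_b, z_1, …, z_{n-a-b})` built from three
families of points (families are indexed from `0`, i.e. `x 0 = x_1`). -/
def rows3 {α : Type*} {n : ℕ} (x y z : ℕ → α) (a b : ℕ) : Fin n → α :=
  fun i => if (i : ℕ) < a then x (i : ℕ)
    else if (i : ℕ) < a + b then y ((i : ℕ) - a)
    else z ((i : ℕ) - (a + b))

/-- The `n`-tuple `(x_1, …, x_a, y_1, …, y_b, z_1, …, z_{n-1-a-b}, w)` built from three
families of points and a final point `w`. -/
def rows3s {α : Type*} {n : ℕ} (x y z : ℕ → α) (a b : ℕ) (w : α) : Fin n → α :=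
  fun i => if (i : ℕ) < a then x (i : ℕ)
    else if (i : ℕ) < a + b then y ((i : ℕ) - a)
    else if (i : ℕ) < n - 1 then z ((i : ℕ) - (a + b))
    else w

/-- The `n`-tuple `(x_1, …, x_{n-1}, t)`. -/
def snocTup {α : Type*} {n : ℕ} (x : ℕ → α) (t : α) : Fin n → α :=
  fun i => if (i : ℕ) < n - 1 then x (i : ℕ) else t

/-- The list `f_a, f_{a-1}, …, f_1` (descending enumeration). -/
def descPts (f : ℕ → Circle1) (a : ℕ) : List Circle1 := ((List.range a).map f).reverse

/-- The list `f_1, f_2, …, f_a` (ascending enumeration). -/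
def ascPts (f : ℕ → Circle1) (a : ℕ) : List Circle1 := (List.range a).map f

/-- The `(n×n)`-determinant quotient `Δ(numR, v)/Δ(denR, v)` as an element of the total
fraction ring `Q_n(P)`. -/
def EQuot (K : Type) [Field K] (P : Set Circle1) (n : ℕ)
    (numR denR v : Fin n → ↥P)
    (h : toZn K P n (Dmat K P n denR v) ∈ nonZeroDivisors (ZnRing K P n)) :
    QnRing K P n :=
  Localization.mk (toZn K P n (Dmat K P n numR v)) ⟨toZn K P n (Dmat K P n denR v), h⟩


def SgnZ (a b : Circle1) : ℚ := sgnQ (coordAt 0 a - coordAt 0 b)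

lemma sgnQ_neg (a : ℝ) : sgnQ (-a) = - sgnQ a := by
  unfold sgnQ
  rcases lt_trichotomy a 0 with h | h | h
  · rw [if_neg (by linarith), if_neg (by linarith), if_pos h]; norm_num
  · simp [h]
  · rw [if_pos (by linarith), if_neg (by linarith), if_neg (by linarith)]

lemma SgnZ_anti (a b : Circle1) : SgnZ b a = - SgnZ a b := by
  unfold SgnZ
  rw [← sgnQ_neg, neg_sub]

lemma sgnQ_three (a b c : ℝ) : sgnQ (a - b) * sgnQ (b - c) + sgnQ (b - c) * sgnQ (c - a)
    + sgnQ (c - a) * sgnQ (a - b) = -1 + if a = b ∧ b = c then 1 else 0 := by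
  unfold sgnQ
  rcases lt_trichotomy a b with h | h | h <;> rcases lt_trichotomy b c with h' | h' | h' <;>
  rcases lt_trichotomy a c with h'' | h'' | h'' <;>
  first
  | (exfalso; linarith)
  | (subst_vars; simp; done)
  | (subst_vars; simp [sub_neg, sub_eq_zero, h, h', h.not_gt, h'.not_gt, h.ne, h'.ne, h.ne', h'.ne']; done)
  | (subst_vars; simp [sub_neg, sub_eq_zero, h, h.not_gt, h.ne, h.ne']; done)
  | (subst_vars; simp [sub_neg, sub_eq_zero, h', h'.not_gt, h'.ne, h'.ne']; done)
  | (simp [sub_neg, sub_eq_zero, h, h', h'', h.not_gt, h'.not_gt, h''.not_gt, h.ne, h'.ne, h''.ne, h.ne', h'.ne', h''.ne']; done)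

lemma coordAt_inj (o a b : Circle1) : coordAt o a = coordAt o b ↔ a = b := by
  unfold coordAt
  constructor
  · intro h
    have := (AddCircle.equivIco 1 0).injective (Subtype.ext h)
    simpa using this
  · rintro rfl; rfl

lemma SgnZ_three (a b c : Circle1) : SgnZ a b * SgnZ b c + SgnZ b c * SgnZ c a
    + SgnZ c a * SgnZ a b = -1 + if a = b ∧ b = c then 1 else 0 := by
  unfold SgnZ
  rw [sgnQ_three]
  simp only [coordAt_inj]

lemma linkingAt_eq (o r x s y : Circle1) : linkingAt o r x s y =
    (1/2) * (sgnQ (coordAt o r - coordAt o y) - sgnQ (coordAt o x - coordAt o y)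
      - sgnQ (coordAt o r - coordAt o s) + sgnQ (coordAt o x - coordAt o s)) := by
  have key : ∀ r x y : ℝ, sgnQ (r - x) * sgnQ (r - y) * sgnQ (y - x)
      = (sgnQ (r - y) - sgnQ (x - y)) - sgnQ (r - x) := by
    intro r x y
    unfold sgnQ
    rcases lt_trichotomy r x with h | h | h <;> rcases lt_trichotomy x y with h' | h' | h' <;>
    rcases lt_trichotomy r y with h'' | h'' | h'' <;>
    first
    | (exfalso; linarith)
    | (subst_vars; simp; done)
    | (subst_vars; simp [sub_neg, sub_eq_zero, h, h', h.not_gt, h'.not_gt, h.ne, h'.ne, h.ne', h'.ne']; done)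
    | (subst_vars; simp [sub_neg, sub_eq_zero, h, h.not_gt, h.ne, h.ne']; done)
    | (simp [sub_neg, sub_eq_zero, h, h', h'', h.not_gt, h'.not_gt, h''.not_gt, h.ne, h'.ne, h''.ne, h.ne', h'.ne', h''.ne']; done)
  unfold linkingAt
  rw [key, key]
  ring

lemma coordAt_mem (o a : Circle1) : 0 ≤ coordAt o a ∧ coordAt o a < 1 := by
  have := ((AddCircle.equivIco 1 0) (a - o)).2
  simpa [coordAt] using this

lemma coordAt_coe (o a : Circle1) : ((coordAt o a : ℝ) : Circle1) = a - o :=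
  (AddCircle.equivIco 1 0).symm_apply_apply (a - o)

lemma coordAt_unique (o a : Circle1) (t : ℝ) (h0 : 0 ≤ t) (h1 : t < 1)
    (h : (t : Circle1) = a - o) : coordAt o a = t := by
  unfold coordAt
  have : (AddCircle.equivIco 1 0).symm ⟨t, by simpa using ⟨h0, h1⟩⟩ = a - o := h
  rw [← this, Equiv.apply_symm_apply]

lemma coordAt_cut (o a : Circle1) : coordAt o a =
    coordAt 0 a - coordAt 0 o + if coordAt 0 a < coordAt 0 o then 1 else 0 := by
  have ha := coordAt_mem 0 a
  have ho := coordAt_mem 0 o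
  split_ifs with h
  · apply coordAt_unique
    · linarith
    · linarith
    · rw [AddCircle.coe_add, AddCircle.coe_sub, coordAt_coe, coordAt_coe, AddCircle.coe_period]; simp
  · apply coordAt_unique
    · linarith
    · linarith
    · rw [add_zero, AddCircle.coe_sub, coordAt_coe, coordAt_coe]; simp

lemma sgnQ_cut (o a b : Circle1) : sgnQ (coordAt o a - coordAt o b) = SgnZ a b
    + ((if coordAt 0 a < coordAt 0 o then 2 else 0) - if coordAt 0 b < coordAt 0 o then 2 else 0) := by
  have ha := coordAt_mem 0 a
  have hb := coordAt_mem 0 b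
  rw [coordAt_cut o a, coordAt_cut o b]
  unfold SgnZ
  generalize coordAt 0 a = u at *
  generalize coordAt 0 b = v at *
  generalize coordAt 0 o = w at *
  have pos : ∀ t : ℝ, 0 < t → sgnQ t = 1 := fun t ht => by
    unfold sgnQ; rw [if_neg (by linarith), if_neg (by linarith)]
  have neg : ∀ t : ℝ, t < 0 → sgnQ t = -1 := fun t ht => by
    unfold sgnQ; rw [if_pos ht]
  split_ifs with h h'
  · ring_nf
  · rw [pos _ (by linarith), neg _ (by linarith)]; norm_num
  · rw [neg _ (by linarith), pos _ (by linarith)]; norm_num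
  · ring_nf

lemma linkQ_eq (r x s y : Circle1) : linkQ r x s y =
    (1/2) * (SgnZ r y - SgnZ x y - SgnZ r s + SgnZ x s) := by
  unfold linkQ
  rw [linkingAt_eq]
  simp only [sgnQ_cut]
  ring


section
variable (K : Type) [Field K] [CharZero K] (P : Set Circle1) (c1 c2 : K)

def SK (a b : ↥P) : K := ((SgnZ a.1 b.1 : ℚ) : K)

lemma SK_anti (a b : ↥P) : SK K P b a = - SK K P a b := by
  unfold SK; rw [SgnZ_anti]; push_cast; rfl

lemma SK_three (a b c : ↥P) : SK K P a b * SK K P b c + SK K P b c * SK K P c a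
    + SK K P c a * SK K P a b = -1 + if a = b ∧ b = c then 1 else 0 := by
  unfold SK
  have := congrArg (fun q : ℚ => (q : K)) (SgnZ_three a.1 b.1 c.1)
  simp only [Subtype.coe_inj] at this
  split_ifs at this ⊢ <;> push_cast at this <;> exact this

lemma gen_self (a : ↥P) : gen K P a a = 0 := by simp [gen]

/-- The linking number in `K`. -/
def JK (r x s y : ↥P) : K := (1/2) * (SK K P r y - SK K P x y - SK K P r s + SK K P x s)

lemma genBr_eq (g g' : SwapIdx P) : genBr K P c1 c2 g g' =
    C (JK K P g.1.1 g.1.2 g'.1.1 g'.1.2) *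
    (C c1 * (gen K P g.1.1 g'.1.2 * gen K P g'.1.1 g.1.2)
      + C c2 * (gen K P g.1.1 g.1.2 * gen K P g'.1.1 g'.1.2)) := by
  unfold genBr JK SK
  rw [linkQ_eq]
  simp only [MvPolynomial.smul_eq_C_mul]
  push_cast
  rfl

lemma JK_anti (r x s y : ↥P) : JK K P s y r x = - JK K P r x s y := by
  unfold JK
  rw [SK_anti K P s x, SK_anti K P y x, SK_anti K P s r, SK_anti K P y r]
  rw [SK_anti K P r s, SK_anti K P x s, SK_anti K P r y, SK_anti K P x y]
  ring

lemma genBr_anti (g g' : SwapIdx P) : genBr K P c1 c2 g' g = - genBr K P c1 c2 g g' := by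
  rw [genBr_eq, genBr_eq, JK_anti, C_neg]
  ring

lemma swapBr_add_left (a b c : SwapRing K P) :
    swapBr K P c1 c2 (a + b) c = swapBr K P c1 c2 a c + swapBr K P c1 c2 b c := by
  unfold swapBr; rw [map_add]

lemma swapBr_mul_left (a b c : SwapRing K P) :
    swapBr K P c1 c2 (a * b) c = a * swapBr K P c1 c2 b c + b * swapBr K P c1 c2 a c := by
  unfold swapBr; rw [Derivation.leibniz]; rfl

lemma swapBr_C_left (k : K) (c : SwapRing K P) :
    swapBr K P c1 c2 (C k) c = 0 := by
  unfold swapBr; exact MvPolynomial.derivation_C _ _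

lemma swapBr_X_left (g : SwapIdx P) (c : SwapRing K P) :
    swapBr K P c1 c2 (X g) c = mkDerivation K (genBr K P c1 c2 g) c := by
  unfold swapBr; rw [mkDerivation_X]

lemma swapBr_X_right (g : SwapIdx P) (a : SwapRing K P) :
    swapBr K P c1 c2 a (X g) = - mkDerivation K (genBr K P c1 c2 g) a := by
  unfold swapBr
  rw [← Derivation.neg_apply]
  congr 1
  apply MvPolynomial.derivation_ext
  intro i
  rw [mkDerivation_X, mkDerivation_X, Derivation.neg_apply, mkDerivation_X, genBr_anti]

lemma swapBr_add_right (a b c : SwapRing K P) :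
    swapBr K P c1 c2 a (b + c) = swapBr K P c1 c2 a b + swapBr K P c1 c2 a c := by
  unfold swapBr
  rw [← Derivation.add_apply]
  congr 1
  apply MvPolynomial.derivation_ext
  intro i
  rw [Derivation.add_apply, mkDerivation_X, mkDerivation_X, mkDerivation_X, map_add]

lemma swapBr_mul_right (a b c : SwapRing K P) :
    swapBr K P c1 c2 a (b * c) = b * swapBr K P c1 c2 a c + c * swapBr K P c1 c2 a b := by
  unfold swapBr
  rw [← smul_eq_mul, ← smul_eq_mul, ← smul_eq_mul, ← Derivation.smul_apply,
    ← Derivation.smul_apply, ← Derivation.add_apply]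
  congr 1
  apply MvPolynomial.derivation_ext
  intro i
  rw [Derivation.add_apply, Derivation.smul_apply, Derivation.smul_apply,
    mkDerivation_X, mkDerivation_X, mkDerivation_X, smul_eq_mul, Derivation.leibniz]

lemma swapBr_C_right (k : K) (a : SwapRing K P) :
    swapBr K P c1 c2 a (C k) = 0 := by
  unfold swapBr
  rw [← Derivation.zero_apply (R := K) a]
  congr 1
  apply MvPolynomial.derivation_ext
  intro g
  rw [mkDerivation_X, MvPolynomial.derivation_C]; rfl

lemma swapBr_anti (a b : SwapRing K P) : swapBr K P c1 c2 a b = - swapBr K P c1 c2 b a := by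
  induction b using MvPolynomial.induction_on with
  | C k => rw [swapBr_C_left, swapBr_C_right, neg_zero]
  | add p q hp hq => rw [swapBr_add_left, swapBr_add_right, hp, hq]; ring
  | mul_X p g hp => rw [swapBr_mul_left, swapBr_mul_right, hp, swapBr_X_left, swapBr_X_right]; ring

lemma JK_self_left (r s y : ↥P) : JK K P r r s y = 0 := by unfold JK; ring
lemma JK_self_right (r x s : ↥P) : JK K P r x s s = 0 := by unfold JK; ring

lemma swapBr_gen (r x s y : ↥P) : swapBr K P c1 c2 (gen K P r x) (gen K P s y) =
    C (JK K P r x s y) *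
    (C c1 * (gen K P r y * gen K P s x) + C c2 * (gen K P r x * gen K P s y)) := by
  by_cases h : r = x
  · subst h
    rw [gen_self, JK_self_left, ← C_0, swapBr_C_left]; simp
  by_cases h' : s = y
  · subst h'
    rw [gen_self, JK_self_right, ← C_0, swapBr_C_right]; simp
  have e1 : gen K P r x = X (⟨(r, x), h⟩ : SwapIdx P) := by unfold gen; rw [dif_pos h]
  have e2 : gen K P s y = X (⟨(s, y), h'⟩ : SwapIdx P) := by unfold gen; rw [dif_pos h']
  have := genBr_eq K P c1 c2 ⟨(r, x), h⟩ ⟨(s, y), h'⟩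
  conv_lhs => rw [e1, e2]
  rw [swapBr_X_left, mkDerivation_X, this]

lemma JK_hex (r x s y t z : ↥P) :
    4 * (JK K P s y t z * JK K P r x s z + JK K P t z r x * JK K P s y t x
      + JK K P r x s y * JK K P t z r y) =
    (if r = s ∧ s = t then 1 else 0) - (if r = s ∧ s = z then 1 else 0)
    - (if r = y ∧ y = t then 1 else 0) + (if r = y ∧ y = z then 1 else 0)
    - (if x = s ∧ s = t then 1 else 0) + (if x = s ∧ s = z then 1 else 0)
    + (if x = y ∧ y = t then 1 else 0) - (if x = y ∧ y = z then 1 else 0) := by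
  have h1 := SK_three K P r s t
  have h2 := SK_three K P r s z
  have h3 := SK_three K P r y t
  have h4 := SK_three K P r y z
  have h5 := SK_three K P x s t
  have h6 := SK_three K P x s z
  have h7 := SK_three K P x y t
  have h8 := SK_three K P x y z
  have hs : ∀ a, SK K P a a = 0 := fun a => by
    simp [SK, SgnZ, sgnQ]
  simp only [SK_anti K P r t, SK_anti K P r z, SK_anti K P x t, SK_anti K P x z] at h1 h2 h3 h4 h5 h6 h7 h8
  unfold JK
  simp only [hs, SK_anti K P r t, SK_anti K P r z, SK_anti K P x t, SK_anti K P x z,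
    SK_anti K P r s, SK_anti K P r y, SK_anti K P x s, SK_anti K P x y,
    SK_anti K P s t, SK_anti K P s z, SK_anti K P y t, SK_anti K P y z,
    SK_anti K P t z, SK_anti K P r x, SK_anti K P s y]
  linear_combination h1 - h2 - h3 + h4 - h5 + h6 + h7 - h8

lemma hex_mon (r x s y t z : ↥P) :
    C (JK K P s y t z * JK K P r x s z + JK K P t z r x * JK K P s y t x
      + JK K P r x s y * JK K P t z r y) *
    (gen K P r z * gen K P s x * gen K P t y - gen K P r y * gen K P t x * gen K P s z) = 0 := by
  have h4 : (4 : K) ≠ 0 := by norm_num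
  have key : (C (4 : K) : SwapRing K P) * (C (JK K P s y t z * JK K P r x s z + JK K P t z r x * JK K P s y t x
      + JK K P r x s y * JK K P t z r y) *
    (gen K P r z * gen K P s x * gen K P t y - gen K P r y * gen K P t x * gen K P s z)) = 0 := by
    rw [← mul_assoc, ← C_mul, JK_hex]
    set M := gen K P r z * gen K P s x * gen K P t y - gen K P r y * gen K P t x * gen K P s z with hM
    have e : ∀ a b c : ↥P, (a = b → b = c → M = 0) →
        (C (if a = b ∧ b = c then (1:K) else 0) : SwapRing K P) * M = 0 := by
      intro a b c h
      split_ifs with h'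
      · rw [h h'.1 h'.2, mul_zero]
      · rw [C_0, zero_mul]
    have e1 := e r s t (by rintro rfl rfl; rw [hM]; ring)
    have e2 := e r s z (by rintro rfl rfl; rw [hM]; simp [gen_self])
    have e3 := e r y t (by rintro rfl rfl; rw [hM]; simp [gen_self])
    have e4 := e r y z (by rintro rfl rfl; rw [hM]; simp [gen_self])
    have e5 := e x s t (by rintro rfl rfl; rw [hM]; simp [gen_self])
    have e6 := e x s z (by rintro rfl rfl; rw [hM]; simp [gen_self])
    have e7 := e x y t (by rintro rfl rfl; rw [hM]; simp [gen_self])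
    have e8 := e x y z (by rintro rfl rfl; rw [hM]; ring)
    simp only [C_add, C_sub]
    linear_combination e1 - e2 - e3 + e4 - e5 + e6 + e7 - e8
  rcases mul_eq_zero.mp key with h | h
  · rw [← C_0, (C_injective _ _).eq_iff] at h
    exact absurd h h4
  · exact h

lemma jacobi_gen (r x s y t z : ↥P) :
    swapBr K P c1 c2 (gen K P r x) (swapBr K P c1 c2 (gen K P s y) (gen K P t z))
    + swapBr K P c1 c2 (gen K P s y) (swapBr K P c1 c2 (gen K P t z) (gen K P r x))
    + swapBr K P c1 c2 (gen K P t z) (swapBr K P c1 c2 (gen K P r x) (gen K P s y)) = 0 := by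
  have hex := hex_mon K P r x s y t z
  simp only [swapBr_gen, swapBr_mul_right, swapBr_add_right, swapBr_C_right]
  have lin : ∀ r x s y t z : ↥P, (C (JK K P r x s z) : SwapRing K P) =
      C (JK K P r x s y) + C (JK K P r x t z) - C (JK K P r x t y) := by
    intro r x s y t z
    rw [← C_add, ← C_sub]
    congr 1
    unfold JK; ring
  have an : ∀ r x s y : ↥P, (C (JK K P s y r x) : SwapRing K P) = - C (JK K P r x s y) := by
    intro r x s y; rw [JK_anti, C_neg]
  simp only [C_add, C_mul] at hex
  rw [lin r x s y t z, lin s y t z r x, lin t z r x s y,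
    an r x t z, an s y r x, an t z s y] at *
  simp only [an r x s y, an s y t z, an t z r x, neg_neg] at *
  linear_combination (C c1 * C c1) * hex

def Jac (a b c : SwapRing K P) : SwapRing K P :=
  swapBr K P c1 c2 a (swapBr K P c1 c2 b c) + swapBr K P c1 c2 b (swapBr K P c1 c2 c a)
    + swapBr K P c1 c2 c (swapBr K P c1 c2 a b)

lemma Jac_cyc (a b c : SwapRing K P) : Jac K P c1 c2 a b c = Jac K P c1 c2 b c a := by
  unfold Jac; ring

lemma Jac_ext (a b : SwapRing K P) (h : ∀ g, Jac K P c1 c2 a b (X g) = 0) (c : SwapRing K P) :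
    Jac K P c1 c2 a b c = 0 := by
  induction c using MvPolynomial.induction_on with
  | C k =>
    have h0 : ∀ a, swapBr K P c1 c2 a 0 = 0 := fun a => by simpa using swapBr_C_right K P c1 c2 0 a
    unfold Jac
    rw [swapBr_C_left, swapBr_C_left, swapBr_C_right, h0, h0]; ring
  | add p q hp hq =>
    unfold Jac at *
    simp only [swapBr_add_left, swapBr_add_right]
    linear_combination hp + hq
  | mul_X p g hp =>
    have hg := h g
    unfold Jac at *
    simp only [swapBr_mul_left, swapBr_mul_right, swapBr_add_right]
    rw [swapBr_anti K P c1 c2 (X g) a, swapBr_anti K P c1 c2 p a] at *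
    have hn : ∀ a b, swapBr K P c1 c2 a (-b) = - swapBr K P c1 c2 a b := fun a b => by
      have : -b = C (-1) * b := by simp
      rw [this, swapBr_mul_right, swapBr_C_right]; simp
    simp only [hn] at *
    linear_combination p * hg + X g * hp

lemma X_eq_gen (g : SwapIdx P) : (X g : SwapRing K P) = gen K P g.1.1 g.1.2 := by
  unfold gen; rw [dif_pos g.2]

lemma Jac_zero (a b c : SwapRing K P) : Jac K P c1 c2 a b c = 0 := by
  apply Jac_ext
  intro g
  rw [Jac_cyc]
  rw [Jac_cyc]
  apply Jac_ext
  intro g'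
  rw [Jac_cyc]
  rw [Jac_cyc]
  apply Jac_ext
  intro g''
  rw [X_eq_gen, X_eq_gen, X_eq_gen]
  exact jacobi_gen K P c1 c2 _ _ _ _ _ _

lemma deriv_prod {A ι : Type} [DecidableEq ι] [CommRing A] [Algebra K A] (D : Derivation K A A)
    (s : Finset ι) (f : ι → A) :
    D (∏ i ∈ s, f i) = ∑ i ∈ s, (∏ j ∈ s.erase i, f j) * D (f i) := by
  induction s using Finset.induction_on with
  | empty => simp
  | insert a s ha ih =>
    rw [Finset.prod_insert ha, Derivation.leibniz, ih, Finset.sum_insert ha,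
      Finset.erase_insert ha, smul_eq_mul, smul_eq_mul, Finset.mul_sum, add_comm]
    congr 1
    apply Finset.sum_congr rfl
    intro i hi
    have hne : a ≠ i := fun h => ha (h ▸ hi)
    rw [Finset.erase_insert_of_ne hne, Finset.prod_insert (by simp [ha]), mul_assoc]

lemma Dmat_eq (m : ℕ) (xs ys : Fin m → ↥P) : Dmat K P m xs ys =
    ∑ σ : Equiv.Perm (Fin m), ((Equiv.Perm.sign σ : ℤ) : SwapRing K P) *
      ∏ i, gen K P (xs (σ i)) (ys i) := by
  unfold Dmat
  rw [Matrix.det_apply']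
  rfl

lemma Dmat_upd_y (m : ℕ) (xs ys : Fin m → ↥P) (i : Fin m) (b : ↥P) :
    Dmat K P m xs (Function.update ys i b) =
    ∑ σ : Equiv.Perm (Fin m), ((Equiv.Perm.sign σ : ℤ) : SwapRing K P) *
      (gen K P (xs (σ i)) b * ∏ j ∈ Finset.univ.erase i, gen K P (xs (σ j)) (ys j)) := by
  rw [Dmat_eq]
  apply Finset.sum_congr rfl
  intro σ _
  rw [← Finset.mul_prod_erase _ _ (Finset.mem_univ i)]
  congr 2
  · simp
  · apply Finset.prod_congr rfl
    intro j hj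
    rw [Function.update_of_ne (Finset.ne_of_mem_erase hj)]

lemma Dmat_upd_x (m : ℕ) (xs ys : Fin m → ↥P) (u : Fin m → SwapRing K P) (a : ↥P) :
    ∑ k, u k * Dmat K P m (Function.update xs k a) ys =
    ∑ σ : Equiv.Perm (Fin m), ((Equiv.Perm.sign σ : ℤ) : SwapRing K P) * ∑ i, u (σ i) *
      (gen K P a (ys i) * ∏ j ∈ Finset.univ.erase i, gen K P (xs (σ j)) (ys j)) := by
  simp only [Dmat_eq, Finset.mul_sum]
  rw [Finset.sum_comm]
  apply Finset.sum_congr rfl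
  intro σ _
  rw [← Equiv.sum_comp σ]
  apply Finset.sum_congr rfl
  intro i _
  rw [← Finset.mul_prod_erase _ _ (Finset.mem_univ i)]
  rw [Function.update_self]
  have : ∏ j ∈ Finset.univ.erase i, gen K P (Function.update xs (σ i) a (σ j)) (ys j)
      = ∏ j ∈ Finset.univ.erase i, gen K P (xs (σ j)) (ys j) := by
    apply Finset.prod_congr rfl
    intro j hj
    rw [Function.update_of_ne (fun h => Finset.ne_of_mem_erase hj (σ.injective h))]
  rw [this]; ring

lemma br_Dmat (m : ℕ) (xs ys : Fin m → ↥P) (a b : ↥P) (hab : a ≠ b) :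
    swapBr K P c1 c2 (gen K P a b) (Dmat K P m xs ys) =
    (C c2 * gen K P a b * ∑ i, C ((1/2) * (SK K P a (ys i) - SK K P b (ys i)
        - SK K P a (xs i) + SK K P b (xs i)))) * Dmat K P m xs ys
    + ∑ i, (C (c1 * ((1/2) * (SK K P a (ys i) - SK K P b (ys i)))) * gen K P a (ys i)) *
        Dmat K P m xs (Function.update ys i b)
    + ∑ i, (C (c1 * ((1/2) * (SK K P b (xs i) - SK K P a (xs i)))) * gen K P (xs i) b) *
        Dmat K P m (Function.update xs i a) ys := by
  have hD : ∀ c, swapBr K P c1 c2 (gen K P a b) c =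
      mkDerivation K (genBr K P c1 c2 ⟨(a, b), hab⟩) c := by
    intro c
    have e1 : gen K P a b = X (⟨(a, b), hab⟩ : SwapIdx P) := by unfold gen; rw [dif_pos hab]
    rw [e1, swapBr_X_left]
  rw [Dmat_upd_x K P m xs ys
    (fun i => C (c1 * ((1/2) * (SK K P b (xs i) - SK K P a (xs i)))) * gen K P (xs i) b) a]
  simp only [Dmat_upd_y]
  rw [hD, Dmat_eq, map_sum, Finset.mul_sum]
  simp only [Finset.mul_sum (s := Finset.univ (α := Equiv.Perm (Fin m)))]
  rw [Finset.sum_comm (s := Finset.univ (α := Fin m)), ← Finset.sum_add_distrib,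
    ← Finset.sum_add_distrib]
  apply Finset.sum_congr rfl
  intro σ _
  have hsum : (∑ i, C ((1/2) * (SK K P a (ys i) - SK K P b (ys i)
        - SK K P a (xs i) + SK K P b (xs i))) : SwapRing K P)
      = ∑ i, C (JK K P a b (xs (σ i)) (ys i)) := by
    have h1 := Equiv.sum_comp σ (fun i => (C ((1/2) * (- SK K P a (xs i) + SK K P b (xs i))) : SwapRing K P))
    have h2 : ∀ i, (C ((1/2) * (SK K P a (ys i) - SK K P b (ys i)
        - SK K P a (xs i) + SK K P b (xs i))) : SwapRing K P)
        = C ((1/2) * (SK K P a (ys i) - SK K P b (ys i)))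
          + C ((1/2) * (- SK K P a (xs i) + SK K P b (xs i))) := by
      intro i; rw [← C_add]; congr 1; ring
    simp only [h2]
    rw [Finset.sum_add_distrib, ← h1, ← Finset.sum_add_distrib]
    apply Finset.sum_congr rfl
    intro i _
    rw [← C_add]; congr 1; unfold JK; ring
  rw [hsum, Derivation.leibniz, Derivation.map_intCast, smul_zero, add_zero, deriv_prod,
    smul_eq_mul, Finset.mul_sum, Finset.mul_sum, Finset.mul_sum, Finset.sum_mul,
    ← Finset.sum_add_distrib, ← Finset.sum_add_distrib]
  apply Finset.sum_congr rfl
  intro i _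
  rw [← hD, swapBr_gen, ← Finset.mul_prod_erase _ _ (Finset.mem_univ i)]
  unfold JK
  simp only [C_mul, C_add, C_sub]
  ring

lemma Dmat_mem (n : ℕ) (xs ys : Fin (n+1) → ↥P) : Dmat K P (n+1) xs ys ∈ Rideal K P n :=
  Ideal.subset_span ⟨xs, ys, rfl⟩

lemma br_gen_mem (n : ℕ) (g : SwapIdx P) (r : SwapRing K P) (hr : r ∈ Rideal K P n) :
    swapBr K P c1 c2 (X g) r ∈ Rideal K P n := by
  unfold Rideal at hr
  induction hr using Submodule.span_induction with
  | mem x hx =>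
    obtain ⟨xs, ys, rfl⟩ := hx
    rw [X_eq_gen, br_Dmat _ _ _ _ _ _ _ _ _ g.2]
    refine Ideal.add_mem _ (Ideal.add_mem _ ?_ ?_) ?_
    · exact Ideal.mul_mem_left _ _ (Dmat_mem _ _ _ _ _)
    · exact Ideal.sum_mem _ fun i _ => Ideal.mul_mem_left _ _ (Dmat_mem _ _ _ _ _)
    · exact Ideal.sum_mem _ fun i _ => Ideal.mul_mem_left _ _ (Dmat_mem _ _ _ _ _)
  | zero => rw [← C_0, swapBr_C_right]; exact Ideal.zero_mem _
  | add x y _ _ hx hy => rw [swapBr_add_right]; exact Ideal.add_mem _ hx hy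
  | smul a x hx' hx =>
    rw [smul_eq_mul, swapBr_mul_right]
    exact Ideal.add_mem _ (Ideal.mul_mem_left _ _ hx) (Ideal.mul_mem_right _ _ hx')

lemma br_mem (n : ℕ) (a r : SwapRing K P) (hr : r ∈ Rideal K P n) :
    swapBr K P c1 c2 a r ∈ Rideal K P n := by
  induction a using MvPolynomial.induction_on with
  | C k => rw [swapBr_C_left]; exact Ideal.zero_mem _
  | add p q hp hq => rw [swapBr_add_left]; exact Ideal.add_mem _ hp hq
  | mul_X p g hp =>
    rw [swapBr_mul_left]
    exact Ideal.add_mem _ (Ideal.mul_mem_left _ _ (br_gen_mem K P c1 c2 n g r hr))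
      (Ideal.mul_mem_left _ _ hp)

lemma toZn_br_right (n : ℕ) (a b b' : SwapRing K P) (h : toZn K P n b = toZn K P n b') :
    toZn K P n (swapBr K P c1 c2 a b) = toZn K P n (swapBr K P c1 c2 a b') := by
  have h1 : b - b' ∈ Rideal K P n := Ideal.Quotient.eq.mp h
  have h2 := br_mem K P c1 c2 n a _ h1
  have h3 : swapBr K P c1 c2 a b = swapBr K P c1 c2 a (b - b') + swapBr K P c1 c2 a b' := by
    rw [← swapBr_add_right, sub_add_cancel]
  rw [h3, map_add]
  have : toZn K P n (swapBr K P c1 c2 a (b - b')) = 0 := Ideal.Quotient.eq_zero_iff_mem.mpr h2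
  rw [this, zero_add]

lemma toZn_br (n : ℕ) (a a' b b' : SwapRing K P) (ha : toZn K P n a = toZn K P n a')
    (h : toZn K P n b = toZn K P n b') :
    toZn K P n (swapBr K P c1 c2 a b) = toZn K P n (swapBr K P c1 c2 a' b') := by
  rw [toZn_br_right K P c1 c2 n a b b' h, swapBr_anti, map_neg,
    toZn_br_right K P c1 c2 n b' a a' ha, ← map_neg, ← swapBr_anti]

end

/-- For every `n ≥ 2` and all `c1, c2 ∈ K`, the ideal `R_n(P)` is a Poisson
ideal of `Z(P)` for the `(c1,c2)`-swapping bracket, i.e. `{Z(P), R_n(P)} ⊆ R_n(P)`;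
consequently the `(c1,c2)`-swapping bracket descends to a well-defined Poisson bracket on
the rank `n` swapping ring `Z_n(P) = Z(P)/R_n(P)`. -/
theorem Rideal_is_poisson_ideal (K : Type) [Field K] [CharZero K] (P : Set Circle1)
    (n : ℕ) (hn : 2 ≤ n) (c1 c2 : K) :
    (∀ a r : SwapRing K P, r ∈ Rideal K P n → swapBr K P c1 c2 a r ∈ Rideal K P n) ∧
    (∃ B : ZnRing K P n → ZnRing K P n → ZnRing K P n,
      (∀ a b : SwapRing K P,
        B (toZn K P n a) (toZn K P n b) = toZn K P n (swapBr K P c1 c2 a b)) ∧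
      (∀ u w : ZnRing K P n, B u w = - B w u) ∧
      (∀ u w s : ZnRing K P n, B (u * w) s = u * B w s + w * B u s) ∧
      (∀ u w s : ZnRing K P n, B u (w * s) = w * B u s + s * B u w) ∧
      (∀ u w s : ZnRing K P n, B u (B w s) + B w (B s u) + B s (B u w) = 0)) := by
  have surj : Function.Surjective (toZn K P n) := Ideal.Quotient.mk_surjective
  refine ⟨fun a r hr => br_mem K P c1 c2 n a r hr,
    fun u w => toZn K P n (swapBr K P c1 c2 (Function.surjInv surj u) (Function.surjInv surj w)),
    ?_⟩
  have hB : ∀ a b : SwapRing K P, toZn K P n (swapBr K P c1 c2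
      (Function.surjInv surj (toZn K P n a)) (Function.surjInv surj (toZn K P n b)))
      = toZn K P n (swapBr K P c1 c2 a b) := fun a b =>
    toZn_br K P c1 c2 n _ _ _ _ (Function.surjInv_eq surj _) (Function.surjInv_eq surj _)
  refine ⟨hB, ?_, ?_, ?_, ?_⟩
  · intro u w
    obtain ⟨a, rfl⟩ := surj u
    obtain ⟨b, rfl⟩ := surj w
    simp only [hB]
    rw [swapBr_anti, map_neg]
  · intro u w s
    obtain ⟨a, rfl⟩ := surj u
    obtain ⟨b, rfl⟩ := surj w
    obtain ⟨c, rfl⟩ := surj s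
    simp only [← map_mul, hB]
    rw [swapBr_mul_left, map_add]
  · intro u w s
    obtain ⟨a, rfl⟩ := surj u
    obtain ⟨b, rfl⟩ := surj w
    obtain ⟨c, rfl⟩ := surj s
    simp only [← map_mul, hB]
    rw [swapBr_mul_right, map_add]
  · intro u w s
    obtain ⟨a, rfl⟩ := surj u
    obtain ⟨b, rfl⟩ := surj w
    obtain ⟨c, rfl⟩ := surj s
    simp only [hB]
    rw [← map_add, ← map_add]
    have := Jac_zero K P c1 c2 a b c
    unfold Jac at this
    rw [this, map_zero]

end
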